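/- arXiv:2311.13375 — 10 statements merged into one kernel-verified Lean document; each statement's English description precedes it below -/
import Mathlib

section
/- Let p be an odd prime and let g ∈ ZMod p with g ≠ 0 and g ≠ -1. Suppose the truncated first-kind rogue sequence of g exhausts the rogue set A_1^p, i.e. for every x ∈ ZMod p with x ≠ 0 and x ≠ -1 there exists n ≥ 0 such that x = 2^n(g+1) - 1 and 2^m(g+1) - 1 ≠ 0 for all m < n. Then g = 1. -/
/-!
Under `x ↦ 2 * x + 1` the only preimage of `1` is `0`, where the sequence is truncated; hence `1`
can occur in the truncated sequence only as its first term.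
-/

section RogueSequence

variable {R : Type*} [Ring R]

/-- The first-kind rogue sequence starting at `g`, in closed form and without truncation. Indices
start at `0`, so that `rogueSeq g n` is the term `u_{n+1}`. -/
def rogueSeq (g : R) (n : ℕ) : R := 2 ^ n * (g + 1) - 1

lemma rogueSeq_zero (g : R) : rogueSeq g 0 = g := by
  simp [rogueSeq]

lemma rogueSeq_succ (g : R) (n : ℕ) : rogueSeq g (n + 1) = 2 * rogueSeq g n + 1 := by
  simp only [rogueSeq, pow_succ']
  noncomm_ring

lemma rogueSeq_succ_eq_one_iff (h2 : IsLeftRegular (2 : R)) (g : R) (n : ℕ) :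
    rogueSeq g (n + 1) = 1 ↔ rogueSeq g n = 0 := by
  rw [rogueSeq_succ, add_eq_right, h2.mul_left_eq_zero_iff]

theorem stmt_2_general (h2 : IsLeftRegular (2 : R)) {g : R}
    (hone : ∃ n : ℕ, 1 = rogueSeq g n ∧ ∀ m < n, rogueSeq g m ≠ 0) : g = 1 := by
  obtain ⟨n, hn, hne⟩ := hone
  cases n with
  | zero => rw [hn, rogueSeq_zero]
  | succ k => exact absurd ((rogueSeq_succ_eq_one_iff h2 g k).1 hn.symm) (hne k k.lt_succ_self)

end RogueSequence

/-- If the truncated first-kind rogue sequence of `g` exhausts the rogue set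
`A_1^p = {x : ZMod p | x ≠ 0, x ≠ -1}`, then `g = 1`. -/
theorem stmt_2 (p : ℕ) (hp : p.Prime) (hp2 : p ≠ 2) (g : ZMod p)
    (hg0 : g ≠ 0) (hg1 : g ≠ -1)
    (hgen : ∀ x : ZMod p, x ≠ 0 → x ≠ -1 →
      ∃ n : ℕ, x = 2 ^ n * (g + 1) - 1 ∧ ∀ m < n, (2 : ZMod p) ^ m * (g + 1) - 1 ≠ 0) :
    g = 1 := by
  have : Fact p.Prime := ⟨hp⟩
  have hchar : ringChar (ZMod p) ≠ 2 := by rwa [ZMod.ringChar_zmod_n]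
  exact stmt_2_general (IsRegular.of_ne_zero (Ring.two_ne_zero hchar)).left
    (hgen 1 one_ne_zero (Ring.neg_one_ne_one_of_char_ne_two hchar).symm)
end

section
/- Let p be an odd prime. Then there exists g ∈ ZMod p with g ≠ 0, g ≠ -1 and 2^n(g+1) ≠ 1 for all n ≥ 0 (i.e. p is a rogue prime of the first kind) if and only if 2 is not a primitive root modulo p. -/
/-!
Put `x = g + 1`, so that `g ≠ -1` says that `x` is a unit. Then `g` has a rogue loop iff `x⁻¹` is
not a power of `2`, so such a `g` exists iff the powers of `2` do not exhaust the unit group. The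
condition `g ≠ 0` comes for free: it is the case `n = 0` of the loop condition.
-/

section Group

variable {G : Type*} [Group G] [Finite G] {a : G}

theorem powers_eq_top_iff_orderOf_eq_card : Submonoid.powers a = ⊤ ↔ orderOf a = Nat.card G := by
  simp only [Submonoid.eq_top_iff', mem_powers_iff_mem_zpowers, ← Subgroup.eq_top_iff',
    ← Subgroup.card_eq_iff_eq_top, Nat.card_zpowers]

theorem exists_forall_pow_mul_ne_one_iff_orderOf_ne_card :
    (∃ x : G, ∀ n : ℕ, a ^ n * x ≠ 1) ↔ orderOf a ≠ Nat.card G := by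
  calc (∃ x : G, ∀ n : ℕ, a ^ n * x ≠ 1)
      ↔ ∃ x : G, x⁻¹ ∉ Submonoid.powers a := by
        simp only [Submonoid.mem_powers_iff, mul_eq_one_iff_eq_inv, ne_eq, not_exists]
    _ ↔ ∃ y : G, y ∉ Submonoid.powers a :=
        (inv_surjective.exists (p := (· ∉ Submonoid.powers a))).symm
    _ ↔ orderOf a ≠ Nat.card G := by
        rw [ne_eq, ← powers_eq_top_iff_orderOf_eq_card, Submonoid.eq_top_iff', not_forall]

end Group

theorem exists_ne_zero_forall_pow_mul_ne_one_iff_orderOf_ne_card_sub_one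
    {G₀ : Type*} [GroupWithZero G₀] [Finite G₀] {a : G₀} (ha : a ≠ 0) :
    (∃ x ≠ 0, ∀ n : ℕ, a ^ n * x ≠ 1) ↔ orderOf a ≠ Nat.card G₀ - 1 := by
  lift a to G₀ˣ using ha.isUnit
  rw [orderOf_units, ← Nat.card_units, ← exists_forall_pow_mul_ne_one_iff_orderOf_ne_card,
    ← Units.exists_iff_ne_zero]
  norm_cast

theorem stmt_3_general {F : Type*} [Field F] [Finite F] {a : F} (ha : a ≠ 0) :
    (∃ g : F, g ≠ 0 ∧ g ≠ -1 ∧ ∀ n : ℕ, a ^ n * (g + 1) ≠ 1) ↔ orderOf a ≠ Nat.card F - 1 := by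
  rw [← exists_ne_zero_forall_pow_mul_ne_one_iff_orderOf_ne_card_sub_one ha]
  constructor
  · rintro ⟨g, -, hg, hloop⟩
    exact ⟨g + 1, mt eq_neg_of_add_eq_zero_left hg, hloop⟩
  · rintro ⟨x, hx, hloop⟩
    have hx_ne_one : x ≠ 1 := by simpa using hloop 0
    refine ⟨x - 1, sub_ne_zero.mpr hx_ne_one, ?_, ?_⟩
    · simpa only [ne_eq, sub_eq_iff_eq_add, neg_add_cancel] using hx
    · simpa only [sub_add_cancel] using hloop

/-- `p` is a rogue prime of the first kind iff `2` is not a primitive root modulo `p`. -/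
theorem stmt_3 (p : ℕ) (hp : p.Prime) (hp2 : p ≠ 2) :
    (∃ g : ZMod p, g ≠ 0 ∧ g ≠ -1 ∧ ∀ n : ℕ, (2 : ZMod p) ^ n * (g + 1) ≠ 1) ↔
      orderOf (2 : ZMod p) ≠ p - 1 := by
  have : Fact p.Prime := ⟨hp⟩
  have two_ne_zero : (2 : ZMod p) ≠ 0 := Ring.two_ne_zero (by rwa [ZMod.ringChar_zmod_n])
  simpa only [Nat.card_zmod] using stmt_3_general two_ne_zero
end

section
/- Let p be an odd prime. Then there exists g ∈ ZMod p with g ≠ 0, g ≠ 1 and 2^n(g-1) ≠ -1 for all n ≥ 0 (i.e. p is a rogue prime of the second kind) if and only if 2 is not a primitive root modulo p. -/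
/-!
With `x = g - 1`, the condition on `g` says that `x` is a nonzero residue whose orbit under doubling
misses `-1`. In a finite group the orbit of every element under multiplication by `a` reaches a
prescribed element exactly when the powers of `a` exhaust the group. In a finite ring, if the orbit
of every nonzero element under multiplication by `a ≠ 0` reaches the unit `-1`, then `a`, and hence
every nonzero element, is a unit. Conversely, if the order of `a` is the number of nonzero elements,
its powers leave no room for nonzero nonunits. Either way the group case applies to all nonzero
elements.
-/

theorem forall_exists_pow_mul_eq_iff_orderOf_eq_card {G : Type*} [Group G] [Finite G] (a b : G) :
    (∀ x, ∃ n : ℕ, a ^ n * x = b) ↔ orderOf a = Nat.card G := by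
  calc (∀ x, ∃ n : ℕ, a ^ n * x = b)
      ↔ ∀ x, b / x ∈ Submonoid.powers a := by
        simp only [Submonoid.mem_powers_iff, eq_div_iff_mul_eq']
    _ ↔ ∀ y, y ∈ Subgroup.zpowers a := by
        simp only [mem_powers_iff_mem_zpowers]
        exact (Equiv.divLeft b).forall_congr_right
    _ ↔ orderOf a = Nat.card G := by
        rw [← Subgroup.eq_top_iff', ← Subgroup.card_eq_iff_eq_top, Nat.card_zpowers]

section MonoidWithZero

variable {M₀ : Type*} [MonoidWithZero M₀]

theorem isUnit_of_forall_exists_pow_mul_eq {a : M₀} (ha : a ≠ 0) (u : M₀ˣ)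
    (h : ∀ x ≠ 0, ∃ n : ℕ, a ^ n * x = u) {x : M₀} (hx : x ≠ 0) : IsUnit x := by
  have a_isUnit : IsUnit a := by
    obtain ⟨n, hn⟩ := h a ha
    rw [← isUnit_pow_succ_iff (n := n), pow_succ, hn]
    exact u.isUnit
  obtain ⟨n, hn⟩ := h x hx
  exact (a_isUnit.pow n).mul_left_iff.mp (hn ▸ u.isUnit)

theorem card_units_eq_card_sub_one_iff [Nontrivial M₀] [Finite M₀] :
    Nat.card M₀ˣ = Nat.card M₀ - 1 ↔ ∀ x : M₀, x ≠ 0 → IsUnit x := by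
  have units_subset : Set.range ((↑) : M₀ˣ → M₀) ⊆ {0}ᶜ := by
    rintro _ ⟨u, rfl⟩
    exact u.ne_zero
  rw [← Set.ncard_range_of_injective (Units.val_injective (α := M₀)),
    ← Set.ncard_singleton (0 : M₀), ← Set.ncard_compl]
  exact ⟨fun h _ hx => (Set.eq_of_subset_of_ncard_le units_subset h.ge).ge hx,
    fun h => congrArg Set.ncard (units_subset.antisymm h)⟩

theorem orderOf_eq_card_sub_one_iff [Nontrivial M₀] [Finite M₀] (a : M₀ˣ) :
    orderOf a = Nat.card M₀ - 1 ↔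
      (∀ x : M₀, x ≠ 0 → IsUnit x) ∧ orderOf a = Nat.card M₀ˣ := by
  have order_le : orderOf a ≤ Nat.card M₀ˣ := orderOf_le_card
  have card_lt : Nat.card M₀ˣ < Nat.card M₀ := natCard_units_lt M₀
  rw [← card_units_eq_card_sub_one_iff]
  lia

theorem isUnit_of_orderOf_eq_card_sub_one [Nontrivial M₀] [Finite M₀] {a : M₀}
    (h : orderOf a = Nat.card M₀ - 1) : IsUnit a := by
  have one_lt_card : 1 < Nat.card M₀ := Finite.one_lt_card
  exact (orderOf_pos_iff.mp (by lia)).isUnit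

theorem forall_ne_zero_exists_pow_mul_eq_iff_orderOf_eq_card_sub_one [Finite M₀] {a : M₀}
    (ha : a ≠ 0) (u : M₀ˣ) :
    (∀ x ≠ 0, ∃ n : ℕ, a ^ n * x = u) ↔ orderOf a = Nat.card M₀ - 1 := by
  have : Nontrivial M₀ := nontrivial_of_ne a 0 ha
  constructor
  · intro h
    have isUnit_of_ne_zero (x : M₀) (hx : x ≠ 0) : IsUnit x :=
      isUnit_of_forall_exists_pow_mul_eq ha u h hx
    lift a to M₀ˣ using isUnit_of_ne_zero a ha
    rw [orderOf_units, orderOf_eq_card_sub_one_iff,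
      ← forall_exists_pow_mul_eq_iff_orderOf_eq_card a u]
    refine ⟨isUnit_of_ne_zero, fun x => ?_⟩
    exact_mod_cast h x x.ne_zero
  · intro h
    lift a to M₀ˣ using isUnit_of_orderOf_eq_card_sub_one h
    rw [orderOf_units, orderOf_eq_card_sub_one_iff,
      ← forall_exists_pow_mul_eq_iff_orderOf_eq_card a u] at h
    obtain ⟨isUnit_of_ne_zero, reaches_u⟩ := h
    intro x hx
    lift x to M₀ˣ using isUnit_of_ne_zero x hx
    exact_mod_cast reaches_u x

end MonoidWithZero

theorem stmt_4_general {R : Type*} [Ring R] [Finite R] {a : R} (ha : a ≠ 0) :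
    (∃ g : R, g ≠ 0 ∧ g ≠ 1 ∧ ∀ n : ℕ, a ^ n * (g - 1) ≠ -1) ↔
      orderOf a ≠ Nat.card R - 1 := by
  calc (∃ g : R, g ≠ 0 ∧ g ≠ 1 ∧ ∀ n : ℕ, a ^ n * (g - 1) ≠ -1)
      ↔ ∃ g : R, g - 1 ≠ 0 ∧ ∀ n : ℕ, a ^ n * (g - 1) ≠ -1 := by
        refine exists_congr fun g => ?_
        have ne_zero_of_forall (h : ∀ n : ℕ, a ^ n * (g - 1) ≠ -1) : g ≠ 0 := by
          rintro rfl
          simpa using h 0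
        rw [sub_ne_zero]
        tauto
    _ ↔ ∃ x : R, x ≠ 0 ∧ ∀ n : ℕ, a ^ n * x ≠ -1 :=
        (Equiv.subRight (1 : R)).exists_congr_right (q := fun x => x ≠ 0 ∧ ∀ n : ℕ, a ^ n * x ≠ -1)
    _ ↔ ¬ ∀ x : R, x ≠ 0 → ∃ n : ℕ, a ^ n * x = ((-1 : Rˣ) : R) := by
        push Not
        simp only [Units.val_neg, Units.val_one]
    _ ↔ orderOf a ≠ Nat.card R - 1 :=
        not_congr <|
          forall_ne_zero_exists_pow_mul_eq_iff_orderOf_eq_card_sub_one ha (-1)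

/-- `p` is a rogue prime of the second kind iff `2` is not a primitive root modulo `p`. -/
theorem stmt_4 (p : ℕ) (hp : p.Prime) (hp2 : p ≠ 2) :
    (∃ g : ZMod p, g ≠ 0 ∧ g ≠ 1 ∧ ∀ n : ℕ, (2 : ZMod p) ^ n * (g - 1) ≠ -1) ↔
      orderOf (2 : ZMod p) ≠ p - 1 := by
  have := Fact.mk hp
  simpa only [Nat.card_zmod] using
    stmt_4_general (a := (2 : ZMod p)) (Ring.two_ne_zero (by rwa [ZMod.ringChar_zmod_n]))
end

section
/- Let p and q be odd primes with q < p, suppose 2 is a primitive root modulo q, and suppose p ≢ -1 (mod q). Then there exists m with 1 ≤ m ≤ q - 2 such that p ≡ 2^m - 1 (mod q), and for any such m: q divides 2^{q-1-m}(p+1) - 1, and the Cunningham chain of the first kind with base p has length at most q - 1 - m; in particular its length is strictly less than p - 1. (Here 'length at most L' means: for every k such that 2^j(p+1) - 1 is prime for all 0 ≤ j < k, one has k ≤ L.) -/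
/-!
If `b` is a primitive root modulo `q`, then `p + 1 ≡ b ^ m` for some exponent `m`, so multiplying
by `b ^ (q - 1 - m)` completes the power to `b ^ (q - 1) ≡ 1`. Hence `q` divides the term
`b ^ (q - 1 - m) * (p + 1) - 1`, which is at least `p > q` and therefore composite.
-/

theorem exists_lt_pow_eq_of_orderOf_eq_card_sub_one {K : Type*} [Field K] [Fintype K] {a x : K}
    (ha : orderOf a = Fintype.card K - 1) (hx : x ≠ 0) :
    ∃ m < Fintype.card K - 1, a ^ m = x := by
  have hprim : IsPrimitiveRoot a (Fintype.card K - 1) := ha ▸ IsPrimitiveRoot.orderOf a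
  have : NeZero (Fintype.card K - 1) := ⟨Nat.sub_ne_zero_of_lt Fintype.one_lt_card⟩
  exact hprim.eq_pow_of_pow_eq_one (FiniteField.pow_card_sub_one_eq_one x hx)

theorem dvd_pow_mul_sub_one_of_orderOf_dvd {b c m n q : ℕ} (hc : (c : ZMod q) = (b : ZMod q) ^ m)
    (hmn : orderOf (b : ZMod q) ∣ n + m) : q ∣ b ^ n * c - 1 := by
  rcases Nat.eq_zero_or_pos (b ^ n * c) with hzero | hpos
  · simp [hzero]
  · have hone : (b : ZMod q) ^ n * c = 1 := by
      rw [hc, ← pow_add, orderOf_dvd_iff_pow_eq_one.mp hmn]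
    rw [← ZMod.natCast_eq_zero_iff, Nat.cast_sub hpos]
    push_cast
    rw [hone, sub_self]

theorem le_of_forall_lt_prime_of_dvd {u : ℕ → ℕ} {k n q : ℕ} (hq : q ≠ 1) (hdvd : q ∣ u n)
    (hne : q ≠ u n) (hprime : ∀ j < k, (u j).Prime) : k ≤ n := by
  by_contra! hnk
  exact ((Nat.dvd_prime (hprime n hnk)).mp hdvd).elim hq hne

theorem exists_eq_pow_sub_one_of_orderOf_eq {p q : ℕ} [Fact q.Prime] {a : ZMod q}
    (ha : orderOf a = q - 1) (hndvd : ¬ q ∣ p) (hne : (p : ZMod q) ≠ -1) :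
    ∃ m : ℕ, 1 ≤ m ∧ m ≤ q - 2 ∧ (p : ZMod q) = a ^ m - 1 := by
  have hp1 : (p : ZMod q) + 1 ≠ 0 := fun h ↦ hne (eq_neg_of_add_eq_zero_left h)
  obtain ⟨m, hm, hpow⟩ :=
    exists_lt_pow_eq_of_orderOf_eq_card_sub_one (by rwa [ZMod.card]) hp1
  rw [ZMod.card] at hm
  have hpm : (p : ZMod q) = a ^ m - 1 := eq_sub_of_add_eq hpow.symm
  have hm0 : m ≠ 0 := by
    rintro rfl
    exact hndvd ((ZMod.natCast_eq_zero_iff p q).mp (by rw [hpm, pow_zero, sub_self]))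
  exact ⟨m, Nat.one_le_iff_ne_zero.mpr hm0, by omega, hpm⟩

theorem stmt_8_general {b p q : ℕ} (hq : q.Prime) (hqp : q < p) (hndvd : ¬ q ∣ p)
    (hroot : orderOf (b : ZMod q) = q - 1) (hne : (p : ZMod q) ≠ -1) :
    (∃ m : ℕ, 1 ≤ m ∧ m ≤ q - 2 ∧ (p : ZMod q) = (b : ZMod q) ^ m - 1) ∧
    (∀ m ≤ q - 1, (p : ZMod q) = (b : ZMod q) ^ m - 1 →
      q ∣ b ^ (q - 1 - m) * (p + 1) - 1 ∧
      (∀ k : ℕ, (∀ j < k, Nat.Prime (b ^ j * (p + 1) - 1)) → k ≤ q - 1 - m) ∧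
      q - 1 - m < p - 1) := by
  have : Fact q.Prime := ⟨hq⟩
  refine ⟨exists_eq_pow_sub_one_of_orderOf_eq hroot hndvd hne, fun m hm hpm ↦ ?_⟩
  have hdvd : q ∣ b ^ (q - 1 - m) * (p + 1) - 1 :=
    dvd_pow_mul_sub_one_of_orderOf_dvd (by rw [Nat.cast_add_one, hpm, sub_add_cancel])
      (by rw [hroot, Nat.sub_add_cancel hm])
  have hq1 : 1 < q := hq.one_lt
  have hb : 0 < b := by
    refine Nat.pos_of_ne_zero fun hb0 ↦ ?_
    simp only [hb0, Nat.cast_zero, orderOf_zero] at hroot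
    omega
  have hlt : q < b ^ (q - 1 - m) * (p + 1) - 1 :=
    hqp.trans_le (Nat.le_sub_one_of_lt (Nat.le_mul_of_pos_left _ (pow_pos hb _)))
  exact ⟨hdvd, fun k ↦ le_of_forall_lt_prime_of_dvd (u := fun j ↦ b ^ j * (p + 1) - 1)
    hq.ne_one hdvd hlt.ne, by omega⟩

/-- If `q < p` are odd primes, `2` is a primitive root modulo `q`, and `p ≢ -1 (mod q)`,
then `p ≡ 2^m - 1 (mod q)` for some `1 ≤ m ≤ q - 2`, and for any such `m` the number
`2^(q-1-m)(p+1) - 1` is divisible by `q`, the Cunningham chain of the first kind with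
base `p` has length at most `q - 1 - m`, and `q - 1 - m < p - 1`. -/
theorem stmt_8 (p q : ℕ) (hp : p.Prime) (hq : q.Prime) (hp2 : p ≠ 2) (hq2 : q ≠ 2)
    (hqp : q < p) (hroot : orderOf (2 : ZMod q) = q - 1) (hne : (p : ZMod q) ≠ -1) :
    (∃ m : ℕ, 1 ≤ m ∧ m ≤ q - 2 ∧ (p : ZMod q) = 2 ^ m - 1) ∧
    (∀ m : ℕ, 1 ≤ m → m ≤ q - 2 → (p : ZMod q) = 2 ^ m - 1 →
      q ∣ 2 ^ (q - 1 - m) * (p + 1) - 1 ∧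
      (∀ k : ℕ, (∀ j < k, Nat.Prime (2 ^ j * (p + 1) - 1)) → k ≤ q - 1 - m) ∧
      q - 1 - m < p - 1) := by
  have hndvd : ¬ q ∣ p := fun h ↦ hqp.ne ((Nat.prime_dvd_prime_iff_eq hq hp).mp h)
  have ⟨hex, hall⟩ := stmt_8_general (b := 2) hq hqp hndvd (mod_cast hroot) hne
  exact ⟨mod_cast hex, fun m _ hm hpm ↦ hall m (by omega) (mod_cast hpm)⟩
end

section
/- Let p > 5 be prime. If p ≢ 4 (mod 5), then the Cunningham chain of the first kind with base p has length at most 4, i.e. there exists j with 1 ≤ j ≤ 4 such that 2^j(p+1) - 1 is not prime. If p ≢ 1 (mod 5), then the Cunningham chain of the second kind with base p has length at most 4, i.e. there exists j with 1 ≤ j ≤ 4 such that 2^j(p-1) + 1 is not prime. -/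
/-!
Since `2` generates `(ℤ/5ℤ)ˣ`, multiplying a nonzero residue modulo `5` by `2, 2², 2³, 2⁴` runs
through all nonzero residues. Hence `5` divides one of the four numbers `2 ^ j * (p + 1) - 1` unless
`p + 1` is itself divisible by `5`, and likewise for `2 ^ j * (p - 1) + 1` and `p - 1`; the term in
question exceeds `5`. The same argument works for every prime `q` and every primitive root modulo
`q` in place of `5` and `2`.
-/

theorem exists_pow_eq_of_isPrimitiveRoot {R : Type*} [CommRing R] [IsDomain R] {k : ℕ} [NeZero k]
    {ζ ξ : R} (hζ : IsPrimitiveRoot ζ k) (hξ : ξ ^ k = 1) : ∃ j, 1 ≤ j ∧ j ≤ k ∧ ζ ^ j = ξ := by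
  obtain ⟨i, hik, rfl⟩ := hζ.eq_pow_of_pow_eq_one hξ
  rcases i.eq_zero_or_pos with rfl | hi
  · exact ⟨k, NeZero.one_le, le_rfl, by rw [hζ.pow_eq_one, pow_zero]⟩
  · exact ⟨i, hi, hik.le, rfl⟩

section PrimitiveRoot

variable {q b : ℕ} [Fact q.Prime]

theorem pos_of_isPrimitiveRoot_natCast (hb : IsPrimitiveRoot (b : ZMod q) (q - 1)) : 0 < b := by
  have hq : q - 1 ≠ 0 := Nat.sub_ne_zero_of_lt (Fact.out : q.Prime).one_lt
  refine Nat.pos_of_ne_zero fun h ↦ ?_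
  exact (hb.isUnit hq).ne_zero (by rw [h, Nat.cast_zero])

theorem exists_pow_mul_eq_of_isPrimitiveRoot {ζ x y : ZMod q} (hζ : IsPrimitiveRoot ζ (q - 1))
    (hx : x ≠ 0) (hy : y ≠ 0) : ∃ j, 1 ≤ j ∧ j ≤ q - 1 ∧ ζ ^ j * x = y := by
  have : NeZero (q - 1) := ⟨Nat.sub_ne_zero_of_lt (Fact.out : q.Prime).one_lt⟩
  obtain ⟨j, hj, hjq, hpow⟩ :=
    exists_pow_eq_of_isPrimitiveRoot hζ (ZMod.pow_card_sub_one_eq_one (div_ne_zero hy hx))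
  exact ⟨j, hj, hjq, by rw [hpow, div_mul_cancel₀ y hx]⟩

theorem exists_dvd_pow_mul_sub_one {m : ℕ} (hb : IsPrimitiveRoot (b : ZMod q) (q - 1))
    (hm : ¬ q ∣ m) : ∃ j, 1 ≤ j ∧ j ≤ q - 1 ∧ q ∣ b ^ j * m - 1 := by
  obtain ⟨j, hj, hjq, hmul⟩ :=
    exists_pow_mul_eq_of_isPrimitiveRoot hb (mt (ZMod.natCast_eq_zero_iff m q).mp hm) one_ne_zero
  have hpos : 1 ≤ b ^ j * m :=
    Nat.mul_pos (pow_pos (pos_of_isPrimitiveRoot_natCast hb) j)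
      (Nat.pos_of_ne_zero fun h ↦ hm (h ▸ dvd_zero q))
  refine ⟨j, hj, hjq, (ZMod.natCast_eq_zero_iff _ q).mp ?_⟩
  rw [Nat.cast_sub hpos, Nat.cast_mul, Nat.cast_pow, hmul, Nat.cast_one, sub_self]

theorem exists_dvd_pow_mul_add_one {m : ℕ} (hb : IsPrimitiveRoot (b : ZMod q) (q - 1))
    (hm : ¬ q ∣ m) : ∃ j, 1 ≤ j ∧ j ≤ q - 1 ∧ q ∣ b ^ j * m + 1 := by
  obtain ⟨j, hj, hjq, hmul⟩ :=
    exists_pow_mul_eq_of_isPrimitiveRoot hb (mt (ZMod.natCast_eq_zero_iff m q).mp hm)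
      (neg_ne_zero.mpr one_ne_zero)
  refine ⟨j, hj, hjq, (ZMod.natCast_eq_zero_iff _ q).mp ?_⟩
  rw [Nat.cast_add, Nat.cast_mul, Nat.cast_pow, hmul, Nat.cast_one, neg_add_cancel]

theorem stmt_10_general {n : ℕ} (hb : IsPrimitiveRoot (b : ZMod q) (q - 1)) (hqn : q < n) :
    (¬ q ∣ n + 1 → ∃ j, 1 ≤ j ∧ j ≤ q - 1 ∧ ¬ Nat.Prime (b ^ j * (n + 1) - 1)) ∧
    (¬ q ∣ n - 1 → ∃ j, 1 ≤ j ∧ j ≤ q - 1 ∧ ¬ Nat.Prime (b ^ j * (n - 1) + 1)) := by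
  have two_le_q : 2 ≤ q := (Fact.out : q.Prime).two_le
  have le_pow_mul (j m : ℕ) : m ≤ b ^ j * m :=
    Nat.le_mul_of_pos_left m (pow_pos (pos_of_isPrimitiveRoot_natCast hb) j)
  constructor <;> intro hdvd
  · obtain ⟨j, hj, hjq, hq⟩ := exists_dvd_pow_mul_sub_one hb hdvd
    have hlt : q < b ^ j * (n + 1) - 1 := by have := le_pow_mul j (n + 1); omega
    exact ⟨j, hj, hjq, Nat.not_prime_of_dvd_of_lt hq two_le_q hlt⟩
  · obtain ⟨j, hj, hjq, hq⟩ := exists_dvd_pow_mul_add_one hb hdvd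
    have hlt : q < b ^ j * (n - 1) + 1 := by have := le_pow_mul j (n - 1); omega
    exact ⟨j, hj, hjq, Nat.not_prime_of_dvd_of_lt hq two_le_q hlt⟩

end PrimitiveRoot

theorem isPrimitiveRoot_two_zmod_five : IsPrimitiveRoot ((2 : ℕ) : ZMod 5) (5 - 1) :=
  IsPrimitiveRoot.mk_of_lt _ (by decide) (by decide) fun l _ _ ↦ by interval_cases l <;> decide

/-- For a prime `p > 5`: if `p ≢ 4 (mod 5)` then the Cunningham chain of the first kind
with base `p` has length at most `4`, and if `p ≢ 1 (mod 5)` then the Cunningham chain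
of the second kind with base `p` has length at most `4`. -/
theorem stmt_10 (p : ℕ) (hp : p.Prime) (hp5 : 5 < p) :
    (p % 5 ≠ 4 → ∃ j : ℕ, 1 ≤ j ∧ j ≤ 4 ∧ ¬ Nat.Prime (2 ^ j * (p + 1) - 1)) ∧
    (p % 5 ≠ 1 → ∃ j : ℕ, 1 ≤ j ∧ j ≤ 4 ∧ ¬ Nat.Prime (2 ^ j * (p - 1) + 1)) := by
  have : Fact (Nat.Prime 5) := ⟨Nat.prime_five⟩
  obtain ⟨first, second⟩ := stmt_10_general isPrimitiveRoot_two_zmod_five hp5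
  exact ⟨fun h ↦ first (by omega), fun h ↦ second (by omega)⟩
end

section
/- Let p be an odd prime and let A = {x ∈ ZMod p : x ≠ 0, x ≠ -1}. For a, b ∈ A define Mem(a, b) to hold if there exists n ≥ 0 such that a = 2^n(b+1) - 1 in ZMod p and 2^m(b+1) - 1 ≠ 0 for all m < n, and define R(a, b) to hold if Mem(a, b) or Mem(b, a). Then R is an equivalence relation on A: it is reflexive, symmetric, and transitive. -/
/-!
One step `x ↦ 2 * x + 1` of a rogue sequence, allowed only from `x ≠ 0`, is a relation in which
every element has at most one successor, and at most one predecessor because `2` is cancellable.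
Two elements reachable from a common element therefore lie on one chain, and so do two elements
from which a common element is reachable; hence comparability under reachability is transitive.
Adding `1` turns the step into `x ↦ 2 * x`, which gives the closed form of the sequence.
-/

open Relation Function

section Reachability

variable {α : Type*} {r : α → α → Prop} {a b c : α}

theorem reflTransGen_total_of_leftUnique (hr : Relator.LeftUnique r) (hac : ReflTransGen r a c)
    (hbc : ReflTransGen r b c) : ReflTransGen r a b ∨ ReflTransGen r b a := by
  have total := ReflTransGen.total_of_right_unique hr.flip
    (reflTransGen_swap.mpr hbc) (reflTransGen_swap.mpr hac)
  exact total.imp reflTransGen_swap.mp reflTransGen_swap.mp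

theorem equivalence_symmGen_reflTransGen_of_biUnique (hr : Relator.BiUnique r) :
    Equivalence (SymmGen (ReflTransGen r)) where
  refl _ := .of_rel .refl
  symm := SymmGen.symm
  trans := by
    rintro a b c (hab | hba) (hbc | hcb)
    · exact .of_rel (hab.trans hbc)
    · exact reflTransGen_total_of_leftUnique hr.1 hab hcb
    · exact ReflTransGen.total_of_right_unique hr.2 hba hbc
    · exact .of_rel_symm (hcb.trans hba)

end Reachability

section StoppedStep

variable {α : Type*}

/-- One step of the dynamical system `f` stopped on `s`: points of `s` have no successor. Its
reflexive transitive closure relates `x` to the terms of the orbit of `x`, truncated at the first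
term in `s` (which is included). -/
def StoppedStep (f : α → α) (s : Set α) (x y : α) : Prop :=
  x ∉ s ∧ f x = y

variable {f : α → α} {s : Set α}

theorem StoppedStep.biUnique (hf : Injective f) : Relator.BiUnique (StoppedStep f s) :=
  ⟨fun _ _ _ hac hbc => hf (hac.2.trans hbc.2.symm), fun _ _ _ hab hac => hab.2.symm.trans hac.2⟩

theorem StoppedStep.reflTransGen_iff_exists_iterate {x y : α} :
    ReflTransGen (StoppedStep f s) x y ↔ ∃ n : ℕ, f^[n] x = y ∧ ∀ m < n, f^[m] x ∉ s := by
  constructor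
  · intro hxy
    induction hxy with
    | refl => exact ⟨0, rfl, by simp⟩
    | tail _ hstep ih =>
      obtain ⟨n, rfl, hn⟩ := ih
      refine ⟨n + 1, (iterate_succ_apply' f n x).trans hstep.2, fun m hm => ?_⟩
      rcases Nat.lt_succ_iff_lt_or_eq.mp hm with hlt | rfl
      · exact hn m hlt
      · exact hstep.1
  · rintro ⟨n, rfl, hn⟩
    induction n with
    | zero => exact .refl
    | succ n ih =>
      exact (ih fun m hm => hn m (hm.trans n.lt_succ_self)).tail
        ⟨hn n n.lt_succ_self, (iterate_succ_apply' f n x).symm⟩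

end StoppedStep

section RogueStep

variable {K : Type*} [Ring K]

/-- The recurrence `x ↦ q * (x + 1) - 1` of a rogue sequence with an arbitrary multiplier `q`;
the first-kind recurrence `x ↦ 2 * x + 1` is the case `q = 2`. -/
def rogueStep (q x : K) : K :=
  q * (x + 1) - 1

theorem rogueStep_injective {q : K} (hq : IsLeftRegular q) : Injective (rogueStep q) :=
  fun _ _ hxy => add_right_cancel (hq (sub_left_injective hxy))

theorem rogueStep_iterate (q : K) (n : ℕ) (x : K) :
    (rogueStep q)^[n] x = q ^ n * (x + 1) - 1 := by
  have semiconj : Semiconj (· + 1) (rogueStep q) (q * ·) := fun y => sub_add_cancel _ _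
  rw [eq_sub_iff_add_eq, ← mul_left_iterate_apply]
  exact semiconj.iterate_right n x

end RogueStep

theorem isLeftRegular_two_zmod {p : ℕ} (hp : Odd p) : IsLeftRegular (2 : ZMod p) :=
  ((ZMod.isUnit_iff_coprime 2 p).mpr hp.coprime_two_left).isRegular.left

theorem stmt_11_general {K : Type*} [Ring K] {q : K} (hq : IsLeftRegular q) :
    let Mem : K → K → Prop := fun a b =>
      ∃ n : ℕ, a = q ^ n * (b + 1) - 1 ∧ ∀ m < n, q ^ m * (b + 1) - 1 ≠ 0
    Equivalence fun a b => Mem a b ∨ Mem b a := by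
  intro Mem
  have mem_iff (a b : K) : Mem a b ↔ ReflTransGen (StoppedStep (rogueStep q) {0}) b a := by
    simp only [Mem, StoppedStep.reflTransGen_iff_exists_iterate, rogueStep_iterate,
      Set.mem_singleton_iff, eq_comm (a := a), ne_eq]
  have comparable_eq : (fun a b => Mem a b ∨ Mem b a) =
      SymmGen (ReflTransGen (StoppedStep (rogueStep q) {0})) := by
    ext a b
    rw [mem_iff, mem_iff]
    exact or_comm
  rw [comparable_eq]
  exact equivalence_symmGen_reflTransGen_of_biUnique
    (StoppedStep.biUnique (rogueStep_injective hq))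

/-- The relation `R` (membership of one element in the truncated first-kind rogue
sequence of the other) is an equivalence relation on the rogue set
`A_1^p = {x : ZMod p | x ≠ 0, x ≠ -1}`. -/
theorem stmt_11 (p : ℕ) (hp : p.Prime) (hp2 : p ≠ 2) :
    let A : Set (ZMod p) := {x : ZMod p | x ≠ 0 ∧ x ≠ -1}
    let Mem : ZMod p → ZMod p → Prop := fun a b =>
      ∃ n : ℕ, a = 2 ^ n * (b + 1) - 1 ∧ ∀ m < n, (2 : ZMod p) ^ m * (b + 1) - 1 ≠ 0
    let R : ZMod p → ZMod p → Prop := fun a b => Mem a b ∨ Mem b a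
    (∀ a ∈ A, R a a) ∧
    (∀ a ∈ A, ∀ b ∈ A, R a b → R b a) ∧
    (∀ a ∈ A, ∀ b ∈ A, ∀ c ∈ A, R a b → R b c → R a c) := by
  have equiv := stmt_11_general (isLeftRegular_two_zmod (hp.odd_of_ne_two hp2))
  exact ⟨fun a _ => equiv.refl a, fun _ _ _ _ => equiv.symm, fun _ _ _ _ _ _ => equiv.trans⟩
end

section
/- Let p be an odd prime such that 2 is not a primitive root modulo p, and let d be the multiplicative order of 2 modulo p. Then the set {x ∈ ZMod p : x ≠ 0 and x = 2^n - 1 for some n ≥ 1} (the underlying set of the rogue sequence of 1) has exactly d - 1 elements, and d - 1 ≤ (p-3)/2. -/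
/-!
In a ring, `a ^ n - 1` vanishes exactly when `a ^ n = 1`, so the nonzero elements of this form are
the translates by `-1` of the powers of `a` other than `1`; there are `orderOf a - 1` of them.
In a field with `q` elements the order of a unit divides `q - 1`, so it is at most `(q - 1) / 2`
as soon as it differs from `q - 1`.
-/

lemma ncard_powers_eq_orderOf {M : Type*} [Monoid M] {a : M} (ha : IsOfFinOrder a) :
    (Submonoid.powers a : Set M).ncard = orderOf a :=
  (Nat.card_congr (finEquivPowers ha)).symm.trans (Nat.card_fin _)

lemma two_mul_orderOf_le_natCard_of_ne {G : Type*} [Group G] [Finite G] {g : G}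
    (hg : orderOf g ≠ Nat.card G) : 2 * orderOf g ≤ Nat.card G := by
  by_contra! h_lt
  exact hg (Nat.eq_of_dvd_of_lt_two_mul Nat.card_pos.ne' (orderOf_dvd_natCard g) h_lt).symm

section Ring

variable {R : Type*} [Ring R]

lemma setOf_ne_zero_and_eq_pow_sub_one_eq_image (a : R) :
    {x : R | x ≠ 0 ∧ ∃ n : ℕ, 1 ≤ n ∧ x = a ^ n - 1} =
      (· - 1) '' ((Submonoid.powers a : Set R) \ {1}) := by
  ext x
  constructor
  · rintro ⟨hx, n, -, rfl⟩
    exact ⟨a ^ n, ⟨⟨n, rfl⟩, sub_ne_zero.mp hx⟩, rfl⟩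
  · rintro ⟨_, ⟨⟨n, rfl⟩, hn⟩, rfl⟩
    have hn_ne_zero : n ≠ 0 := by
      rintro rfl
      exact hn (pow_zero a)
    exact ⟨sub_ne_zero.mpr hn, n, Nat.one_le_iff_ne_zero.mpr hn_ne_zero, rfl⟩

lemma ncard_setOf_ne_zero_and_eq_pow_sub_one {a : R} (ha : IsOfFinOrder a) :
    {x : R | x ≠ 0 ∧ ∃ n : ℕ, 1 ≤ n ∧ x = a ^ n - 1}.ncard = orderOf a - 1 := by
  rw [setOf_ne_zero_and_eq_pow_sub_one_eq_image, Set.ncard_image_of_injective _ sub_left_injective,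
    Set.ncard_sdiff_singleton_of_mem (one_mem (Submonoid.powers a)), ncard_powers_eq_orderOf ha]

end Ring

theorem stmt_13_general {F : Type*} [Field F] [Finite F] {a : F} (ha : a ≠ 0)
    (hroot : orderOf a ≠ Nat.card F - 1) :
    {x : F | x ≠ 0 ∧ ∃ n : ℕ, 1 ≤ n ∧ x = a ^ n - 1}.ncard = orderOf a - 1 ∧
      orderOf a - 1 ≤ (Nat.card F - 3) / 2 := by
  lift a to Fˣ using ha.isUnit
  rw [orderOf_units, ← Nat.card_units] at hroot
  have h_half : 2 * orderOf a ≤ Nat.card F - 1 :=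
    Nat.card_units F ▸ two_mul_orderOf_le_natCard_of_ne hroot
  have h_fin : IsOfFinOrder (a : F) := Units.isOfFinOrder_val.mpr (isOfFinOrder_of_finite a)
  refine ⟨ncard_setOf_ne_zero_and_eq_pow_sub_one h_fin, ?_⟩
  rw [orderOf_units]
  omega

/-- For an odd prime `p` with `2` not a primitive root mod `p`, the underlying set of
the rogue sequence of `1` has exactly `d - 1` elements, where `d` is the multiplicative
order of `2` mod `p`, and `d - 1 ≤ (p-3)/2`. -/
theorem stmt_13 (p : ℕ) (hp : p.Prime) (hp2 : p ≠ 2)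
    (hroot : orderOf (2 : ZMod p) ≠ p - 1)
    (d : ℕ) (hd : d = orderOf (2 : ZMod p)) :
    {x : ZMod p | x ≠ 0 ∧ ∃ n : ℕ, 1 ≤ n ∧ x = 2 ^ n - 1}.ncard = d - 1 ∧
    d - 1 ≤ (p - 3) / 2 := by
  have : Fact p.Prime := ⟨hp⟩
  have h_two : (2 : ZMod p) ≠ 0 := Ring.two_ne_zero (by rwa [ZMod.ringChar_zmod_n])
  simpa only [hd, Nat.card_zmod] using stmt_13_general h_two (by rwa [Nat.card_zmod])
end

section
/- Let p be an odd prime with 2 not a primitive root modulo p, let d be the multiplicative order of 2 modulo p, and let g ∈ ZMod p with g ≠ 0, g ≠ -1 and 2^n(g+1) ≠ 1 for all n ≥ 0 (so the rogue sequence of g is a rogue loop). Then the set {x ∈ ZMod p : x = 2^n(g+1) - 1 for some n ≥ 0} has exactly d elements; in particular every rogue loop has length at most (p-1)/2. -/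
theorem ncard_range_pow_mul {M : Type*} [Monoid M] {u c : M} (hu : IsOfFinOrder u)
    (hc : IsRightRegular c) : (Set.range fun n : ℕ ↦ u ^ n * c).ncard = orderOf u := by
  have hrange : (Set.range fun n : ℕ ↦ u ^ n * c) = (· * c) '' (Submonoid.powers u : Set M) := by
    rw [Submonoid.coe_powers, ← Set.range_comp']
  calc (Set.range fun n : ℕ ↦ u ^ n * c).ncard
      = (Submonoid.powers u : Set M).ncard := by rw [hrange, Set.ncard_image_of_injective _ hc]
    _ = Nat.card (Fin (orderOf u)) := (Nat.card_congr (finEquivPowers hu)).symm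
    _ = orderOf u := Nat.card_fin _

theorem le_div_two_of_mem_properDivisors {m n : ℕ} (h : m ∈ n.properDivisors) : m ≤ n / 2 := by
  rw [Nat.le_div_iff_mul_le two_pos, mul_comm]
  exact Nat.mul_le_of_le_div m 2 n (Nat.one_lt_div_of_mem_properDivisors h)

theorem orderOf_le_card_div_two_of_ne {G : Type*} [Group G] [Finite G] {x : G}
    (hx : orderOf x ≠ Nat.card G) : orderOf x ≤ Nat.card G / 2 :=
  le_div_two_of_mem_properDivisors <|
    Nat.mem_properDivisors.mpr ⟨orderOf_dvd_natCard x, orderOf_le_card.lt_of_ne hx⟩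

theorem stmt_14_general {R : Type*} [Ring R] [Finite Rˣ] (u : Rˣ)
    (hu : orderOf (u : R) ≠ Nat.card Rˣ) {g : R} (hg : IsRightRegular (g + 1)) :
    {x : R | ∃ n : ℕ, x = u ^ n * (g + 1) - 1}.ncard = orderOf (u : R) ∧
      orderOf (u : R) ≤ Nat.card Rˣ / 2 := by
  rw [orderOf_units] at hu
  have hset : {x : R | ∃ n : ℕ, x = u ^ n * (g + 1) - 1} =
      (· - 1) '' Set.range fun n : ℕ ↦ (u : R) ^ n * (g + 1) := by
    rw [← Set.range_comp']
    simp only [Set.range, eq_comm]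
  rw [hset, Set.ncard_image_of_injective _ sub_left_injective,
    ncard_range_pow_mul (Units.isOfFinOrder_val.mpr (isOfFinOrder_of_finite u)) hg]
  exact ⟨rfl, orderOf_units.trans_le (orderOf_le_card_div_two_of_ne hu)⟩

/-- For an odd prime `p` with `2` not a primitive root mod `p`, every rogue loop in
`A_1^p` has exactly `d` elements, where `d` is the multiplicative order of `2` mod `p`;
in particular every rogue loop has length at most `(p-1)/2`. -/
theorem stmt_14 (p : ℕ) (hp : p.Prime) (hp2 : p ≠ 2)
    (hroot : orderOf (2 : ZMod p) ≠ p - 1)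
    (d : ℕ) (hd : d = orderOf (2 : ZMod p))
    (g : ZMod p) (hg0 : g ≠ 0) (hg1 : g ≠ -1)
    (hloop : ∀ n : ℕ, (2 : ZMod p) ^ n * (g + 1) ≠ 1) :
    {x : ZMod p | ∃ n : ℕ, x = 2 ^ n * (g + 1) - 1}.ncard = d ∧
    d ≤ (p - 1) / 2 := by
  have : Fact p.Prime := ⟨hp⟩
  have hcard : Nat.card (ZMod p)ˣ = p - 1 := by rw [Nat.card_eq_fintype_card, ZMod.card_units]
  have hcoprime : Nat.Coprime 2 p := Nat.coprime_two_left.mpr (hp.odd_of_ne_two hp2)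
  have hg : IsRegular (g + 1) := .of_ne_zero (mt eq_neg_of_add_eq_zero_left hg1)
  rw [← hcard] at hroot ⊢
  subst hd
  exact stmt_14_general (ZMod.unitOfCoprime 2 hcoprime) hroot hg.right
end

section
/- Let p be an odd prime with 2 not a primitive root modulo p, and let d be the multiplicative order of 2 modulo p. Then the set of elements lying on rogue loops, {g ∈ ZMod p : g ≠ 0, g ≠ -1, and 2^n(g+1) ≠ 1 for all n ≥ 0}, has exactly (p - 1) - d elements; equivalently, since each rogue loop has exactly d elements, the number of disjoint rogue loops in A_1^p equals (p-1)/d - 1. -/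
/-!
Put `x = g + 1`. The sequence of `g` reaches `0` exactly when `2 ^ n * x = 1` for some `n`, that is,
when `x` is a power of `2`, because the powers of `2` are closed under inversion. So the elements on
rogue loops correspond to the nonzero residues outside the subgroup of powers of `2`, which has
order `d`.
-/

section Monoid

variable {M : Type*} [Monoid M] {a : M}

theorem exists_pow_mul_eq_one_iff_mem_powers (ha : IsOfFinOrder a) (x : M) :
    (∃ n : ℕ, a ^ n * x = 1) ↔ x ∈ Submonoid.powers a := by
  have pow_mul_pow_eq_one (n : ℕ) : a ^ ((orderOf a - 1) * n) * a ^ n = 1 := by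
    rw [← pow_add, ← Nat.succ_mul, Nat.succ_eq_add_one, Nat.sub_add_cancel ha.orderOf_pos, pow_mul,
      pow_orderOf_eq_one, one_pow]
  constructor
  · rintro ⟨n, hn⟩
    exact ⟨_, left_inv_eq_right_inv (pow_mul_pow_eq_one n) hn⟩
  · rintro ⟨n, rfl⟩
    exact ⟨_, pow_mul_pow_eq_one n⟩

theorem ncard_powers (ha : IsOfFinOrder a) :
    (Submonoid.powers a : Set M).ncard = orderOf a := by
  rw [← Nat.card_coe_set_eq, SetLike.coe_sort_coe, ← Nat.card_congr (finEquivPowers ha),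
    Nat.card_fin]

end Monoid

theorem ncard_compl_insert_zero_powers {M : Type*} [MonoidWithZero M] [Nontrivial M] [Finite M]
    {a : M} (ha : IsUnit a) :
    (insert 0 (Submonoid.powers a : Set M))ᶜ.ncard = Nat.card M - 1 - orderOf a := by
  have zero_notMem : (0 : M) ∉ (Submonoid.powers a : Set M) := by
    rintro ⟨n, hn⟩
    exact (ha.pow n).ne_zero hn
  rw [Set.ncard_compl, Set.ncard_insert_of_notMem zero_notMem,
    ncard_powers ha.isOfFinOrder, Nat.sub_sub, Nat.add_comm 1]

/-- The elements of `R` lying on rogue loops of the first kind, with an arbitrary multiplier `a` in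
place of `2`: the `g` for which `u₁ = g`, `uₙ₊₁ + 1 = a * (uₙ + 1)` never reaches `0`, apart from
the fixed point `-1`. The solved form `uₙ₊₁ = a ^ n * (g + 1) - 1` replaces the recursion. -/
def rogueLoopElements {R : Type*} [Ring R] (a : R) : Set R :=
  {g | g ≠ 0 ∧ g ≠ -1 ∧ ∀ n : ℕ, a ^ n * (g + 1) ≠ 1}

section Ring

variable {R : Type*} [Ring R] {a : R}

theorem rogueLoopElements_eq_preimage_add_one (ha : IsOfFinOrder a) :
    rogueLoopElements a = (· + 1) ⁻¹' (insert 0 (Submonoid.powers a : Set R))ᶜ := by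
  ext g
  have ne_zero_of_forall (h : ∀ n : ℕ, a ^ n * (g + 1) ≠ 1) : g ≠ 0 := by
    rintro rfl
    simpa using h 0
  simp only [rogueLoopElements, Set.mem_ofPred_eq, Set.mem_preimage, Set.mem_compl_iff,
    Set.mem_insert_iff, SetLike.mem_coe, ← exists_pow_mul_eq_one_iff_mem_powers ha, not_or,
    not_exists, add_eq_zero_iff_eq_neg]
  exact ⟨And.right, fun h => ⟨ne_zero_of_forall h.2, h⟩⟩

theorem ncard_rogueLoopElements [Nontrivial R] [Finite R] (ha : IsUnit a) :
    (rogueLoopElements a).ncard = Nat.card R - 1 - orderOf a := by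
  rw [rogueLoopElements_eq_preimage_add_one ha.isOfFinOrder,
    Set.ncard_preimage_of_injective_subset_range (add_left_injective 1)
      (by simp [(add_right_surjective (1 : R)).range_eq]),
    ncard_compl_insert_zero_powers ha]

end Ring

theorem stmt_15_general {K : Type*} [Field K] [Finite K] {a : K} (ha : a ≠ 0) :
    (rogueLoopElements a).ncard = Nat.card K - 1 - orderOf a ∧
      Nat.card K - 1 - orderOf a = ((Nat.card K - 1) / orderOf a - 1) * orderOf a := by
  have orderOf_dvd : orderOf a ∣ Nat.card K - 1 := by
    rw [← Nat.card_units, ← Units.val_mk0 ha, orderOf_units]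
    exact orderOf_dvd_natCard _
  refine ⟨ncard_rogueLoopElements ha.isUnit, ?_⟩
  rw [Nat.sub_mul, Nat.div_mul_cancel orderOf_dvd, one_mul]

/-- For an odd prime `p` with `2` not a primitive root mod `p`, the set of elements of
`A_1^p` lying on rogue loops has exactly `(p - 1) - d` elements, where `d` is the
multiplicative order of `2` mod `p`; since each rogue loop has exactly `d` elements,
the number of disjoint rogue loops is `(p-1)/d - 1`. -/
theorem stmt_15 (p : ℕ) (hp : p.Prime) (hp2 : p ≠ 2)
    (hroot : orderOf (2 : ZMod p) ≠ p - 1)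
    (d : ℕ) (hd : d = orderOf (2 : ZMod p)) :
    {g : ZMod p | g ≠ 0 ∧ g ≠ -1 ∧ ∀ n : ℕ, (2 : ZMod p) ^ n * (g + 1) ≠ 1}.ncard
      = (p - 1) - d ∧
    (p - 1) - d = ((p - 1) / d - 1) * d := by
  have : Fact p.Prime := ⟨hp⟩
  have two_ne_zero : (2 : ZMod p) ≠ 0 := mod_cast ZMod.prime_ne_zero p 2 hp2
  simpa only [rogueLoopElements, Nat.card_zmod, ← hd] using stmt_15_general two_ne_zero
end

section
/- Let p and q be primes with 2 < q < p such that 2 is not a primitive root modulo q, and suppose p ≡ 2^m - 1 (mod q) for some m ≥ 1 (i.e. p, reduced mod q, lies in the rogue sequence of 1). Then the Cunningham chain of the first kind with base p has length at most (q-3)/2, which is strictly less than (p-3)/2; that is, for every k such that 2^j(p+1) - 1 is prime for all 0 ≤ j < k, one has k ≤ (q-3)/2 < (p-3)/2. -/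
/-!
If `p + 1` is a power of `b` modulo `r`, where `b` is coprime to `r`, it has an inverse `b ^ j` with
`j` less than the order of `b`. Then `r` divides `b ^ j * (p + 1) - 1 ≥ p > r`, so this number is
composite and the chain is shorter than the order of `b`. Apply this with `r` the smallest prime
factor of `q`: if `q = r`, the order of `b` is a proper divisor of `q - 1`; otherwise it is at most
`r - 1 ≤ q / 2 - 1`.
-/

theorem exists_lt_orderOf_pow_mul_eq_one {M : Type*} [Monoid M] {x y : M}
    (hx : IsOfFinOrder x) (hy : y ∈ Submonoid.powers x) : ∃ j < orderOf x, x ^ j * y = 1 := by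
  obtain ⟨m, rfl⟩ := hy
  refine ⟨(orderOf x - 1) * m % orderOf x, Nat.mod_lt _ hx.orderOf_pos, ?_⟩
  calc x ^ ((orderOf x - 1) * m % orderOf x) * x ^ m
      = x ^ ((orderOf x - 1 + 1) * m) := by rw [pow_mod_orderOf, ← pow_add, add_one_mul]
    _ = 1 := by rw [Nat.sub_add_cancel hx.orderOf_pos, pow_mul, pow_orderOf_eq_one, one_pow]

theorem exists_lt_orderOf_dvd_pow_mul_sub_one {r a b : ℕ} (hb : b.Coprime r)
    (ha : (a : ZMod r) ∈ Submonoid.powers (b : ZMod r)) :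
    ∃ j < orderOf (b : ZMod r), r ∣ b ^ j * a - 1 := by
  have hfin : IsOfFinOrder (b : ZMod r) :=
    isOfFinOrder_iff_isUnit.mpr ((ZMod.isUnit_iff_coprime b r).mpr hb)
  obtain ⟨j, hj, hinv⟩ := exists_lt_orderOf_pow_mul_eq_one hfin ha
  have hmod : b ^ j * a ≡ 1 [MOD r] := (ZMod.natCast_eq_natCast_iff _ _ _).mp (mod_cast hinv)
  exact ⟨j, hj, Nat.dvd_of_mod_eq_zero (Nat.sub_mod_eq_zero_of_mod_eq hmod)⟩

theorem lt_orderOf_of_forall_prime_pow_mul_sub_one {r p b k : ℕ} (hr : r ≠ 1) (hrp : r < p)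
    (hb : b.Coprime r) (hp : (p + 1 : ZMod r) ∈ Submonoid.powers (b : ZMod r))
    (hprime : ∀ j < k, (b ^ j * (p + 1) - 1).Prime) : k < orderOf (b : ZMod r) := by
  obtain ⟨j, hj, hdvd⟩ := exists_lt_orderOf_dvd_pow_mul_sub_one hb (a := p + 1) (mod_cast hp)
  have hb0 : 0 < b := Nat.pos_of_ne_zero fun h => hr ((Nat.coprime_zero_left r).mp (h ▸ hb))
  have hle : p + 1 ≤ b ^ j * (p + 1) := Nat.le_mul_of_pos_left _ (Nat.pow_pos hb0)
  have hcomposite : ¬ (b ^ j * (p + 1) - 1).Prime :=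
    Nat.not_prime_of_dvd_of_ne hdvd hr (by lia)
  exact (not_lt.mp (mt (hprime j) hcomposite)).trans_lt hj

theorem orderOf_natCast_dvd_totient {b n : ℕ} (hb : b.Coprime n) :
    orderOf (b : ZMod n) ∣ n.totient :=
  orderOf_dvd_of_pow_eq_one
    (mod_cast (ZMod.natCast_eq_natCast_iff _ _ _).mpr (Nat.ModEq.pow_totient hb))

theorem two_mul_le_of_dvd_of_ne {d n : ℕ} (hn : n ≠ 0) (hdvd : d ∣ n) (hne : d ≠ n) : 2 * d ≤ n :=
  not_lt.mp fun hlt => hne (Nat.eq_of_dvd_of_lt_two_mul hn hdvd hlt).symm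

theorem two_mul_orderOf_minFac_le {q b : ℕ} (hq : 1 < q) (hb : b.Coprime q)
    (hroot : orderOf (b : ZMod q) ≠ q - 1) : 2 * orderOf (b : ZMod q.minFac) ≤ q - 1 := by
  by_cases hprime : q.Prime
  · have hdvd : orderOf (b : ZMod q) ∣ q - 1 :=
      Nat.totient_prime hprime ▸ orderOf_natCast_dvd_totient hb
    rw [hprime.minFac_eq]
    exact two_mul_le_of_dvd_of_ne (Nat.sub_ne_zero_of_lt hq) hdvd hroot
  · have hr : 1 < q.minFac := (Nat.minFac_prime hq.ne').one_lt
    have hle : orderOf (b : ZMod q.minFac) ≤ q.minFac.totient :=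
      Nat.le_of_dvd (Nat.totient_pos.mpr q.minFac_pos)
        (orderOf_natCast_dvd_totient (hb.coprime_dvd_right q.minFac_dvd))
    have hlt : q.minFac.totient < q.minFac := Nat.totient_lt _ hr
    have hhalf : 2 * q.minFac ≤ q := two_mul_le_of_dvd_of_ne (by lia) q.minFac_dvd
      ((Nat.not_prime_iff_minFac_lt hq).mp hprime).ne
    lia

theorem stmt_19_general (p q b : ℕ) (hp : Odd p) (hq : 1 < q) (hqp : q < p) (hb : b.Coprime q)
    (hroot : orderOf (b : ZMod q) ≠ q - 1) (hm : ∃ m : ℕ, (p : ZMod q) = b ^ m - 1) :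
    (∀ k : ℕ, (∀ j < k, Nat.Prime (b ^ j * (p + 1) - 1)) → k ≤ (q - 3) / 2) ∧
    (q - 3) / 2 < (p - 3) / 2 := by
  obtain ⟨m, hm⟩ := hm
  have hpow : (p + 1 : ZMod q.minFac) ∈ Submonoid.powers (b : ZMod q.minFac) := by
    have hred := congrArg (ZMod.castHom q.minFac_dvd (ZMod q.minFac)) hm
    simp only [map_sub, map_pow, map_natCast, map_one] at hred
    exact ⟨m, (eq_sub_iff_add_eq.mp hred).symm⟩
  have hchain (k : ℕ) (hk : ∀ j < k, (b ^ j * (p + 1) - 1).Prime) :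
      k < orderOf (b : ZMod q.minFac) :=
    lt_orderOf_of_forall_prime_pow_mul_sub_one (mt Nat.minFac_eq_one_iff.mp hq.ne')
      ((Nat.minFac_le hq.pos).trans_lt hqp) (hb.coprime_dvd_right q.minFac_dvd) hpow hk
  have horder := two_mul_orderOf_minFac_le hq hb hroot
  have hpos := hchain 0 (by simp)
  refine ⟨fun k hk => ?_, by grind⟩
  have hlt := hchain k hk
  lia

/-- If `2 < q < p` are primes, `2` is not a primitive root modulo `q`, and `p` reduced
mod `q` lies in the rogue sequence of `1` (i.e. `p ≡ 2^m - 1 (mod q)` for some `m ≥ 1`),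
then the Cunningham chain of the first kind with base `p` has length at most `(q-3)/2`,
which is strictly less than `(p-3)/2`. -/
theorem stmt_19 (p q : ℕ) (hp : p.Prime) (hq : q.Prime) (hq2 : 2 < q) (hqp : q < p)
    (hroot : orderOf (2 : ZMod q) ≠ q - 1)
    (hm : ∃ m : ℕ, 1 ≤ m ∧ (p : ZMod q) = 2 ^ m - 1) :
    (∀ k : ℕ, (∀ j < k, Nat.Prime (2 ^ j * (p + 1) - 1)) → k ≤ (q - 3) / 2) ∧
    (q - 3) / 2 < (p - 3) / 2 :=
  stmt_19_general p q 2 (hp.odd_of_ne_two (by lia)) hq.one_lt hqp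
    ((Nat.coprime_primes Nat.prime_two hq).mpr hq2.ne) hroot (hm.imp fun _ h => h.2)
end
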